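/- Let f be a normalized new cuspidal eigenform of level N with p ∤ N, non-ordinary at p, and A the associated divisible Galois module. Suppose (i) λ_cyc : H^1(F_S/F_cyc, A) → ⊕_{v∈S} J_v(A/F_cyc) is surjective; (ii) H^2(F_S/F, A) = 0; and (iii) H^1(Γ, Sel(A/F_cyc)) = 0 (equivalently, λ^Γ_cyc is surjective, equivalently δ is surjective). Then the Λ(Γ)-module given by the Pontryagin dual of Sel(A/F_cyc) admits no non-trivial finite submodule. -/

import Mathlib

/-!
Let `g` be the chosen topological generator of `Γ`, corresponding to `1 + T ∈ Λ(Γ)`.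
Multiplication by `T` on the Pontryagin dual `X` of `Sel(A/F_cyc)` is the transpose of `g - 1`
on `Sel(A/F_cyc)`. Since `H^1(Γ, Sel(A/F_cyc)) = 0` says that `g - 1` is surjective,
multiplication by `T` is injective on `X` (`eq_zero_of_X_smul_eq_zero`).

An injective self-map of a finite set is a permutation of finite order, so on a finite submodule
some `T ^ n` with `n > 0` acts as the identity. But `1 - T ^ n` is a unit of `Λ(Γ)`, so the
submodule is zero (`submodule_eq_bot_of_finite`); this last step plays the role of Nakayama's
lemma and needs no topology on `X`.
-/

/-!
# Setting (Hatley–Lei, "On Selmer groups in the supersingular reduction case", §3)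

Let `p` be an odd prime and `f = Σ a_n qⁿ ∈ S_k(Γ_0(N), ε)` a normalized new cuspidal
eigenform of level `N` with `p ∤ N`, `E` the number field generated by its Fourier
coefficients, `λ` a prime of `E` above `p` with `a_p ∈ λ` (so `f` is non-ordinary at
`p`).  Let `V_f` be the `2`-dimensional `E_λ`-linear Galois representation attached to
`f`, `T_f` a Galois-stable `O_λ`-lattice; fix `j ∈ [1, k-1]` and set `T = T_f(j)`,
`V = V_f(j)` and `A = V/T`.  For a number field `L` and a place `v`, `H^1_f(L_v, V)` is
the Bloch–Kato local condition and `H^1_f(L_v, A)` its image; for a rational prime `q`,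
`J_q(A/L) = ⊕_{v∣q} H^1(L_v, A)/H^1_f(L_v, A)`, extended to infinite extensions by
direct limits.  Let `S` be the set of primes dividing `pN`, `F` a number field, `F_cyc`
its cyclotomic `Z_p`-extension and `Γ = Gal(F_cyc/F) ≅ ℤ_p`.

Since `Γ ≅ ℤ_p` is procyclic and acts continuously on the discrete modules over `F_cyc`,
we model the `Γ`-action by the action of a fixed topological generator `g`; the
`Γ`-invariants of a module are the fixed points of `g` and (continuous) `H^1(Γ, ·)` is
the cokernel of `g - 1`.

The structure `MFCycSelmerSetting` records the data of the fundamental diagram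
comparing the defining sequence of `Sel(A/F)` with the `Γ`-invariants of the defining
sequence of `Sel(A/F_cyc)`. -/

structure MFCycSelmerSetting where
  /-- the odd prime `p` -/
  p : ℕ
  [fact_p : Fact p.Prime]
  hodd : p ≠ 2
  /-- the level `N` of the eigenform `f` -/
  N : ℕ
  /-- the weight `k` of the eigenform `f` -/
  k : ℕ
  /-- `p ∤ N` -/
  hpN : ¬ p ∣ N
  /-- the Tate twist `j`, with `1 ≤ j ≤ k - 1` -/
  j : ℕ
  hj : 1 ≤ j ∧ j ≤ k - 1
  /-- the base number field `F` -/
  F : Type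
  [fieldF : Field F]
  [nfF : NumberField F]
  /-- the finite set `S` of primes of `F` dividing `pN` -/
  S : Type
  [finS : Fintype S]
  /-- the predicate `v ∣ p` on `S` -/
  overP : S → Prop
  /-- `H^1(F_S/F, A)` -/
  H1F : Type
  [abH1F : AddCommGroup H1F]
  /-- `H^2(F_S/F, A)` -/
  H2F : Type
  [abH2F : AddCommGroup H2F]
  /-- `J_v(A/F) = ⊕_{w∣v} H^1(F_w, A)/H^1_f(F_w, A)` -/
  JF : S → Type
  [abJF : ∀ v, AddCommGroup (JF v)]
  /-- `H^1(F_S/F_cyc, A)` -/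
  H1Cyc : Type
  [abH1Cyc : AddCommGroup H1Cyc]
  /-- `J_v(A/F_cyc) = lim_→ J_v(A/L)` -/
  JCyc : S → Type
  [abJCyc : ∀ v, AddCommGroup (JCyc v)]
  /-- the localization map `λ = λ_F : H^1(F_S/F, A) → ⊕_{v∈S} J_v(A/F)`
  (whose kernel is `Sel(A/F)`) -/
  lamF : H1F →+ ∀ v, JF v
  /-- the localization map `λ_cyc : H^1(F_S/F_cyc, A) → ⊕_{v∈S} J_v(A/F_cyc)`
  (whose kernel is `Sel(A/F_cyc)`) -/
  lamCyc : H1Cyc →+ ∀ v, JCyc v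
  /-- action of a fixed topological generator of `Γ` on `H^1(F_S/F_cyc, A)` -/
  gH1 : H1Cyc ≃+ H1Cyc
  /-- action of the generator of `Γ` on `J_v(A/F_cyc)` -/
  gJ : ∀ v, JCyc v ≃+ JCyc v
  /-- `λ_cyc` is `Γ`-equivariant -/
  lamCyc_equivariant : ∀ x v, gJ v (lamCyc x v) = lamCyc (gH1 x) v
  /-- the restriction map `β : H^1(F_S/F, A) → H^1(F_S/F_cyc, A)` -/
  β : H1F →+ H1Cyc
  /-- `β` takes values in the `Γ`-invariants `H^1(F_S/F_cyc, A)^Γ` -/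
  β_inv : ∀ x, gH1 (β x) = β x
  /-- the restriction maps `γ_v : J_v(A/F) → J_v(A/F_cyc)` -/
  γv : ∀ v, JF v →+ JCyc v
  /-- each `γ_v` takes values in the `Γ`-invariants `J_v(A/F_cyc)^Γ` -/
  γv_inv : ∀ v x, gJ v (γv v x) = γv v x
  /-- commutativity of the fundamental diagram: `γ ∘ λ = λ_cyc ∘ β` -/
  diag_comm : ∀ x v, γv v (lamF x v) = lamCyc (β x) v

namespace MFCycSelmerSetting

attribute [instance] fact_p fieldF nfF finS abH1F abH2F abJF abH1Cyc abJCyc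

variable (D : MFCycSelmerSetting)

/-- `Sel(A/F_cyc)`, the Selmer group of `A` over `F_cyc`: the kernel of `λ_cyc`. -/
def SelCyc : AddSubgroup D.H1Cyc := D.lamCyc.ker

/-- Surjectivity of the map `λ^Γ_cyc : H^1(F_S/F_cyc, A)^Γ → ⊕_{v∈S} J_v(A/F_cyc)^Γ`
induced by `λ_cyc` on `Γ`-invariants. -/
def LamCycGammaSurjective : Prop :=
  ∀ y : ∀ v, D.JCyc v, (∀ v, D.gJ v (y v) = y v) →
    ∃ x : D.H1Cyc, D.gH1 x = x ∧ D.lamCyc x = y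

/-- Vanishing of `H^1(Γ, Sel(A/F_cyc))`.  Since `Γ ≅ ℤ_p` is procyclic with topological
generator `g` acting on the discrete module `Sel(A/F_cyc)`, `H^1(Γ, ·)` is the cokernel
of `g - 1`; its vanishing says `g - 1` is surjective on `Sel(A/F_cyc)`. -/
def H1GammaSelVanishes : Prop :=
  ∀ x ∈ D.SelCyc, ∃ y ∈ D.SelCyc, D.gH1 y - y = x

/-- Surjectivity of the natural map `δ : ker γ → coker λ` arising from the fundamental
diagram, where `δ` is the restriction to `ker γ ⊆ ⊕_{v∈S} J_v(A/F)` of the projection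
onto `coker λ = (⊕_{v∈S} J_v(A/F)) / Im λ`. -/
def DeltaSurjective : Prop :=
  ∀ y : ∀ v, D.JF v, ∃ z : ∀ v, D.JF v,
    (∀ v, D.γv v (z v) = 0) ∧ ∃ x : D.H1F, y - z = D.lamF x

end MFCycSelmerSetting

/-- The setting of Theorem 3.6: the fundamental-diagram data for `A` together with the
Pontryagin dual of `Sel(A/F_cyc)`, viewed as a module over the Iwasawa algebra
`Λ(Γ) = Z_p[[Γ]] ≅ Z_p[[T]]` (realized as `PowerSeries ℤ_[p]`, a fixed topological
generator `g` of `Γ` corresponding to `1 + T`).  The Pontryagin dual of the discrete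
torsion group `Sel(A/F_cyc)` is its group of homomorphisms to `ℚ/ℤ`, and the
`Λ(Γ)`-action is compatible with the `Γ`-action dual to that on
`Sel(A/F_cyc) = ker λ_cyc`. -/
structure DualMFCycSelmerSetting extends MFCycSelmerSetting where
  /-- the Pontryagin dual of `Sel(A/F_cyc)`, as a `Λ(Γ)`-module -/
  X : Type
  [abX : AddCommGroup X]
  [modX : Module (PowerSeries (PadicInt p)) X]
  /-- `X` is, as a group, the Pontryagin dual `Hom(Sel(A/F_cyc), ℚ/ℤ)` -/
  xiso : X ≃+ (↥lamCyc.ker →+ AddCircle (1 : ℚ))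
  /-- the action of `1 + T ∈ Λ(Γ)` on `X` is dual to the action of the generator `g`
  of `Γ` on `Sel(A/F_cyc)` -/
  xiso_compat : ∀ (f : X) (x : H1Cyc) (hx : x ∈ lamCyc.ker) (hgx : gH1 x ∈ lamCyc.ker),
    xiso (((PowerSeries.X : PowerSeries (PadicInt p)) + 1) • f) ⟨x, hx⟩ =
      xiso f ⟨gH1 x, hgx⟩

namespace DualMFCycSelmerSetting

attribute [instance] abX modX

/-- A power series module on which the variable acts injectively has no nonzero finite
submodule. -/
theorem submodule_eq_bot_of_finite {R M : Type*} [CommRing R] [AddCommGroup M]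
    [Module (PowerSeries R) M]
    (hinj : ∀ m : M, (PowerSeries.X : PowerSeries R) • m = 0 → m = 0)
    (Y : Submodule (PowerSeries R) M) (hY : (Y : Set M).Finite) : Y = ⊥ := by
  have : Finite Y := hY
  have hfin : ∀ y : Y, (PowerSeries.X : PowerSeries R) • y = 0 → y = 0 := fun y hy =>
    Subtype.ext (hinj y (by simpa using congrArg Subtype.val hy))
  have hYinj : Function.Injective fun y : Y => (PowerSeries.X : PowerSeries R) • y := by
    intro a b hab
    have hab' : (PowerSeries.X : PowerSeries R) • a = (PowerSeries.X : PowerSeries R) • b := hab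
    exact sub_eq_zero.mp (hfin _ (by rw [smul_sub, hab', sub_self]))
  let σ : Equiv.Perm Y := Equiv.ofBijective _ (Finite.injective_iff_bijective.mp hYinj)
  have hpow : ∀ (n : ℕ) (y : Y), (σ ^ n) y = (PowerSeries.X : PowerSeries R) ^ n • y := by
    intro n
    induction n with
    | zero => simp
    | succ n ih =>
      intro y
      rw [pow_succ', Equiv.Perm.mul_apply, ih, pow_succ', mul_smul]
      rfl
  obtain ⟨n, hn, hσ⟩ := (isOfFinOrder_of_finite σ).exists_pow_eq_one
  have hunit : IsUnit (1 - (PowerSeries.X : PowerSeries R) ^ n) := by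
    rw [PowerSeries.isUnit_iff_constantCoeff]
    simp [hn.ne']
  rw [Submodule.eq_bot_iff]
  intro y hy
  have hfix : (PowerSeries.X : PowerSeries R) ^ n • y = y := by
    have h := hpow n ⟨y, hy⟩
    rw [hσ] at h
    exact (congrArg Subtype.val h).symm
  rw [← hunit.smul_eq_zero, sub_smul, one_smul, hfix, sub_self]

/-- If `H^1(Γ, Sel(A/F_cyc))` vanishes, then multiplication by `T` is injective on the dual of
`Sel(A/F_cyc)`: a character killed by `T` is trivial on the image of `g - 1`, which is all of
`Sel(A/F_cyc)`. -/
theorem eq_zero_of_X_smul_eq_zero (D : DualMFCycSelmerSetting)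
    (hH1 : D.toMFCycSelmerSetting.H1GammaSelVanishes) (f : D.X)
    (hf : (PowerSeries.X : PowerSeries (PadicInt D.p)) • f = 0) : f = 0 := by
  have hf1 : ((PowerSeries.X : PowerSeries (PadicInt D.p)) + 1) • f = f := by
    rw [add_smul, hf, one_smul, zero_add]
  rw [← D.xiso.map_eq_zero_iff]
  ext ⟨x, hx⟩
  obtain ⟨y, hy, hyx⟩ := hH1 x hx
  have hy' : y ∈ D.lamCyc.ker := hy
  -- `g` preserves the Selmer group because `λ_cyc` is equivariant.
  have hgy : D.gH1 y ∈ D.lamCyc.ker := by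
    rw [AddMonoidHom.mem_ker] at hy' ⊢
    funext v
    rw [← D.lamCyc_equivariant, hy']
    simp
  have hcompat := D.xiso_compat f y hy' hgy
  rw [hf1] at hcompat
  have hsub : (⟨x, hx⟩ : D.lamCyc.ker) = ⟨D.gH1 y, hgy⟩ - ⟨y, hy'⟩ :=
    Subtype.ext hyx.symm
  rw [hsub, map_sub, hcompat, sub_self, AddMonoidHom.zero_apply]

/-- Let `f` be a normalized new cuspidal eigenform of level `N` with
`p ∤ N`, non-ordinary at `p` (part of the setting), and `A` the associated divisible
Galois module.  Suppose (i) `λ_cyc : H^1(F_S/F_cyc, A) → ⊕_{v∈S} J_v(A/F_cyc)` is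
surjective; (ii) `H^2(F_S/F, A) = 0`; and (iii) `H^1(Γ, Sel(A/F_cyc)) = 0`
(equivalently `λ^Γ_cyc` is surjective, equivalently `δ` is surjective).  Then the
`Λ(Γ)`-module given by the Pontryagin dual of `Sel(A/F_cyc)` admits no non-trivial
finite submodule. -/
theorem no_nontrivial_finite_submodule (D : DualMFCycSelmerSetting)
    (hsurj : Function.Surjective D.lamCyc)
    (h2 : Subsingleton D.H2F)
    (hH1 : D.toMFCycSelmerSetting.H1GammaSelVanishes) :
    ∀ Y : Submodule (PowerSeries (PadicInt D.p)) D.X,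
      (Y : Set D.X).Finite → Y = ⊥ := by
  exact fun Y hY => submodule_eq_bot_of_finite (eq_zero_of_X_smul_eq_zero D hH1) Y hY

end DualMFCycSelmerSetting
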